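/- For every n ∈ ℕ there exist a probability density ϱ_n ∈ C^∞(ℝ²) and a C^∞ vector field b_n: ℝ² → ℝ² with |b_n|ϱ_n ∈ L¹(ℝ²) such that Δϱ_n − div(ϱ_n b_n) = 0 in the weak sense and ∫_{ℝ²} |∇ϱ_n| dx ≥ n ∫_{ℝ²} |b_n| ϱ_n dx. -/

import Mathlib

open MeasureTheory Real

noncomputable section

/-- First partial derivative (with respect to the first coordinate) on `ℝ²`. -/
def pd1 (f : ℝ × ℝ → ℝ) (p : ℝ × ℝ) : ℝ := fderiv ℝ f p (1, 0)

/-- Second partial derivative (with respect to the second coordinate) on `ℝ²`. -/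
def pd2 (f : ℝ × ℝ → ℝ) (p : ℝ × ℝ) : ℝ := fderiv ℝ f p (0, 1)

/-- Test functions: smooth compactly supported functions on `ℝ²`. -/
def IsTest (φ : ℝ × ℝ → ℝ) : Prop := ContDiff ℝ (⊤ : ℕ∞) φ ∧ HasCompactSupport φ

/-- Euclidean magnitude of a vector in `ℝ²`. -/
def emag (v : ℝ × ℝ) : ℝ := Real.sqrt (v.1 ^ 2 + v.2 ^ 2)

/-!
If `ϱ b = ∇ϱ + ∇^⊥ψ` then `Δϱ - div (ϱ b) = 0`, since `div ∇^⊥ψ = 0`. So it suffices to find a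
potential `W = (ϱ, ψ)` with `ϱ > 0` for which `∫ |∇ϱ|` is much larger than `∫ |∇ϱ + ∇^⊥ψ|`.

The components of `∇ϱ + ∇^⊥ψ` are the divergence `∂₁ϱ + ∂₂ψ` and, up to sign, the curl
`∂₁ψ - ∂₂ϱ` of the vector field `(ϱ, ψ)`. Both vanish for the singular field `p / |p|²`. Truncating
it smoothly at the scale `√a` near the origin and away from it costs a divergence of bounded `L¹`
norm, whereas `∫ |∇ϱ| ≥ c log (1 / a)`, since `|∇ϱ|` is of order `|p|⁻²`. Hence the ratio of the two
integrals is unbounded.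

To make `ϱ` positive, replace the truncated field by `N²` disjoint copies of it shrunk by the factor
`N`. The supremum and the region containing the support do not grow with `N`, but both integrals are
multiplied by `N`. Adding a fixed multiple of a positive integrable density therefore makes `ϱ`
positive while its contribution to the integrals becomes negligible as `N → ∞`.
-/

section Energy

variable {E F : Type*} [NormedAddCommGroup E] [NormedSpace ℝ E]
  [NormedAddCommGroup F] [NormedSpace ℝ F]

lemma integrable_seminorm_comp {α : Type*} [MeasurableSpace α] {μ : Measure α}
    {P : Seminorm ℝ F} (hP : Continuous P) {f : α → F} (hf : Integrable f μ) :
    Integrable (fun x => P (f x)) μ := by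
  obtain ⟨C, -, hC⟩ := P.bound_of_continuous_normedSpace hP
  refine (hf.norm.const_mul C).mono' (hP.comp_aestronglyMeasurable hf.aestronglyMeasurable) ?_
  filter_upwards with x
  rw [Real.norm_of_nonneg (apply_nonneg P _)]
  exact hC (f x)

/-- The integral `∫ P(Du)` of a seminorm of the derivative: the `L¹` norm of a first-order
differential operator applied to `u`, for instance `∫ |∇u|`. -/
def energy [MeasureSpace E] (P : Seminorm ℝ (E →L[ℝ] F)) (u : E → F) : ℝ :=
  ∫ x, P (fderiv ℝ u x)

lemma energy_const_smul [MeasureSpace E] (P : Seminorm ℝ (E →L[ℝ] F)) (c : ℝ) (u : E → F) :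
    energy P (c • u) = |c| * energy P u := by
  simp only [energy, fderiv_const_smul_field, Pi.smul_apply, map_smul_eq_mul, Real.norm_eq_abs,
    integral_const_mul]

lemma lintegral_ofReal_seminorm_fderiv [MeasureSpace E] {P : Seminorm ℝ (E →L[ℝ] F)}
    (hP : Continuous P) {u : E → F} (hu : Integrable (fderiv ℝ u)) :
    ∫⁻ x, ENNReal.ofReal (P (fderiv ℝ u x)) = ENNReal.ofReal (energy P u) :=
  (ofReal_integral_eq_lintegral_ofReal (integrable_seminorm_comp hP hu)
    (.of_forall fun _ => apply_nonneg P _)).symm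

lemma hasCompactSupport_of_tsupport_subset_ball {X G : Type*} [PseudoMetricSpace X]
    [ProperSpace X] [Zero G] {f : X → G} {x : X} {r : ℝ} (h : tsupport f ⊆ Metric.ball x r) :
    HasCompactSupport f :=
  (isCompact_closedBall x r).of_isClosed_subset (isClosed_tsupport f)
    (h.trans Metric.ball_subset_closedBall)

lemma integrable_fderiv_of_hasCompactSupport [MeasureSpace E] [OpensMeasurableSpace E]
    [IsFiniteMeasureOnCompacts (volume : Measure E)] {u : E → F} (hu : ContDiff ℝ 1 u)
    (hc : HasCompactSupport u) : Integrable (fderiv ℝ u) :=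
  (hu.continuous_fderiv one_ne_zero).integrable_of_hasCompactSupport (hc.fderiv ℝ)

section Add

variable [MeasureSpace E] {P : Seminorm ℝ (E →L[ℝ] F)} {u v : E → F}

lemma integrable_fderiv_add (hu : Differentiable ℝ u) (hv : Differentiable ℝ v)
    (hu' : Integrable (fderiv ℝ u)) (hv' : Integrable (fderiv ℝ v)) :
    Integrable (fderiv ℝ (u + v)) := by
  have hadd : fderiv ℝ (u + v) = fderiv ℝ u + fderiv ℝ v :=
    funext fun x => fderiv_add (hu x) (hv x)
  rw [hadd]
  exact hu'.add (ε' := E →L[ℝ] F) hv'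

lemma energy_add_le (hP : Continuous P) (hu : Differentiable ℝ u) (hv : Differentiable ℝ v)
    (hu' : Integrable (fderiv ℝ u)) (hv' : Integrable (fderiv ℝ v)) :
    energy P (u + v) ≤ energy P u + energy P v := by
  simp only [energy]
  rw [← integral_add (integrable_seminorm_comp hP hu') (integrable_seminorm_comp hP hv')]
  refine integral_mono (integrable_seminorm_comp hP (integrable_fderiv_add hu hv hu' hv'))
    ((integrable_seminorm_comp hP hu').add (integrable_seminorm_comp hP hv')) fun x => ?_
  simp only [fderiv_add (hu x) (hv x)]
  exact map_add_le_add P _ _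

lemma energy_sub_le_energy_add (hP : Continuous P) (hu : Differentiable ℝ u)
    (hv : Differentiable ℝ v) (hu' : Integrable (fderiv ℝ u)) (hv' : Integrable (fderiv ℝ v)) :
    energy P v - energy P u ≤ energy P (u + v) := by
  have hneg : Integrable (fderiv ℝ ((-1 : ℝ) • u)) := by
    simpa only [fderiv_const_smul_field] using hu'.smul (-1 : ℝ)
  have h := energy_add_le hP (hu.const_smul (-1 : ℝ)) (hu.add hv) hneg
    (integrable_fderiv_add hu hv hu' hv')
  rw [energy_const_smul, abs_neg, abs_one, one_mul,
    show (-1 : ℝ) • u + (u + v) = v by module] at h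
  linarith

end Add

section Rescaling

lemma fderiv_comp_smul_sub (u : E → F) (c : ℝ) (b x : E) :
    fderiv ℝ (fun y => u (c • y - b)) x = c • fderiv ℝ u (c • x - b) := by
  rw [fderiv_comp_smul (f := fun y => u (y - b)), fderiv_comp_sub]

variable [MeasureSpace E] [BorelSpace E] [FiniteDimensional ℝ E]
  [(volume : Measure E).IsAddHaarMeasure]

lemma integrable_fderiv_comp_smul_sub {u : E → F} (hu : Integrable (fderiv ℝ u)) {c : ℝ}
    (hc : c ≠ 0) (b : E) : Integrable (fderiv ℝ fun y => u (c • y - b)) := by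
  simp only [funext (fderiv_comp_smul_sub u c b)]
  exact ((hu.comp_sub_right b).comp_smul hc).smul c

lemma energy_comp_smul_sub (P : Seminorm ℝ (E →L[ℝ] F)) (u : E → F) {c : ℝ} (hc : 0 < c)
    (b : E) : energy P (fun y => u (c • y - b)) =
      c * (c ^ Module.finrank ℝ E)⁻¹ * energy P u := by
  simp only [energy, fderiv_comp_smul_sub, map_smul_eq_mul, Real.norm_of_nonneg hc.le,
    integral_const_mul]
  rw [Measure.integral_comp_smul volume (fun y => P (fderiv ℝ u (y - b))) c,
    integral_sub_right_eq_self (fun y => P (fderiv ℝ u y)), abs_of_pos (by positivity),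
    smul_eq_mul, mul_assoc]

end Rescaling

end Energy

section Tiling

variable {F : Type*} [NormedAddCommGroup F]

/-- The lattice point `k`, as a vector of `ℝ²`. -/
def gridPoint (k : ℕ × ℕ) : ℝ × ℝ := (k.1, k.2)

/-- The superposition of `N²` copies of `u`, shrunk by the factor `N` and centred at the points
`k / N` with `k ∈ {0, …, N - 1}²`. -/
def tiling (N : ℕ) (u : ℝ × ℝ → F) (p : ℝ × ℝ) : F :=
  ∑ k ∈ Finset.range N ×ˢ Finset.range N, u ((N : ℝ) • p - gridPoint k)

lemma norm_gridPoint_le {N : ℕ} {k : ℕ × ℕ} (hk : k ∈ Finset.range N ×ˢ Finset.range N) :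
    ‖gridPoint k‖ ≤ N := by
  rw [Finset.mem_product, Finset.mem_range, Finset.mem_range] at hk
  simpa [gridPoint, Prod.norm_def] using And.intro hk.1.le hk.2.le

lemma one_le_dist_gridPoint {j k : ℕ × ℕ} (h : j ≠ k) :
    1 ≤ dist (gridPoint j) (gridPoint k) := by
  simp only [gridPoint, Prod.dist_eq, Nat.dist_cast_real, le_max_iff]
  by_cases h₁ : j.1 = k.1
  · exact Or.inr (Nat.pairwise_one_le_dist fun h₂ => h (Prod.ext h₁ h₂))
  · exact Or.inl (Nat.pairwise_one_le_dist h₁)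

lemma gridPoint_cell_unique {q : ℝ × ℝ} {j k : ℕ × ℕ}
    (hj : q - gridPoint j ∈ Metric.ball 0 (1 / 2))
    (hk : q - gridPoint k ∈ Metric.ball 0 (1 / 2)) : j = k := by
  by_contra hjk
  rw [mem_ball_zero_iff, ← dist_eq_norm] at hj hk
  have := dist_triangle_left (gridPoint j) (gridPoint k) q
  linarith [one_le_dist_gridPoint hjk]

lemma sum_gridPoint_eq_zero_or_single {G : Type*} [Zero G] {w : ℝ × ℝ → G}
    (hw : Function.support w ⊆ Metric.ball 0 (1 / 2)) (s : Finset (ℕ × ℕ)) (q : ℝ × ℝ) :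
    (∀ k ∈ s, w (q - gridPoint k) = 0) ∨
      ∃ k ∈ s, w (q - gridPoint k) ≠ 0 ∧ ∀ j ∈ s, j ≠ k → w (q - gridPoint j) = 0 := by
  by_contra! h
  obtain ⟨⟨k, hks, hk⟩, h⟩ := h
  obtain ⟨j, -, hjk, hj⟩ := h k hks hk
  exact hjk (gridPoint_cell_unique (hw hj) (hw hk))

lemma map_sum_gridPoint {G H : Type*} [AddCommMonoid G] [AddCommMonoid H] {Φ : G → H}
    (hΦ : Φ 0 = 0) {w : ℝ × ℝ → G} (hw : Function.support w ⊆ Metric.ball 0 (1 / 2))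
    (s : Finset (ℕ × ℕ)) (q : ℝ × ℝ) :
    Φ (∑ k ∈ s, w (q - gridPoint k)) = ∑ k ∈ s, Φ (w (q - gridPoint k)) := by
  rcases sum_gridPoint_eq_zero_or_single hw s q with h | ⟨k, hk, -, h⟩
  · rw [Finset.sum_eq_zero h, hΦ, Finset.sum_eq_zero fun k hk => by rw [h k hk, hΦ]]
  · rw [Finset.sum_eq_single_of_mem k hk h,
      Finset.sum_eq_single_of_mem k hk fun j hj hjk => by rw [h j hj hjk, hΦ]]

lemma norm_tiling_le {u : ℝ × ℝ → F} (hu : Function.support u ⊆ Metric.ball 0 (1 / 2)) {B : ℝ}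
    (hB : ∀ p, ‖u p‖ ≤ B) (N : ℕ) (p : ℝ × ℝ) : ‖tiling N u p‖ ≤ B := by
  rcases sum_gridPoint_eq_zero_or_single hu (Finset.range N ×ˢ Finset.range N) ((N : ℝ) • p)
    with h | ⟨k, hk, -, h⟩
  · rw [tiling, Finset.sum_eq_zero h, norm_zero]
    exact (norm_nonneg _).trans (hB 0)
  · rw [tiling, Finset.sum_eq_single_of_mem k hk h]
    exact hB _

lemma tiling_eq_zero {u : ℝ × ℝ → F} (hu : Function.support u ⊆ Metric.ball 0 (1 / 2)) (N : ℕ)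
    {p : ℝ × ℝ} (hp : 2 ≤ ‖p‖) : tiling N u p = 0 := by
  refine Finset.sum_eq_zero fun k hk => Function.notMem_support.1 fun hmem => ?_
  have hcell : ‖(N : ℝ) • p - gridPoint k‖ < 1 / 2 := mem_ball_zero_iff.1 (hu hmem)
  have hN : (1 : ℝ) ≤ N := by
    exact_mod_cast Nat.one_le_of_lt (Finset.mem_range.1 (Finset.mem_product.1 hk).1)
  have hsub := norm_sub_norm_le ((N : ℝ) • p) (gridPoint k)
  rw [norm_smul, Real.norm_natCast] at hsub
  nlinarith [norm_gridPoint_le hk]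

lemma hasCompactSupport_tiling {u : ℝ × ℝ → F}
    (hu : Function.support u ⊆ Metric.ball 0 (1 / 2)) (N : ℕ) :
    HasCompactSupport (tiling N u) := by
  refine HasCompactSupport.intro (isCompact_closedBall (0 : ℝ × ℝ) 2) fun p hp => ?_
  rw [mem_closedBall_zero_iff, not_le] at hp
  exact tiling_eq_zero hu N hp.le

variable [NormedSpace ℝ F]

lemma contDiff_tiling {n : WithTop ℕ∞} {u : ℝ × ℝ → F} (hu : ContDiff ℝ n u) (N : ℕ) :
    ContDiff ℝ n (tiling N u) :=
  ContDiff.sum fun _ _ => hu.comp ((contDiff_const_smul _).sub contDiff_const)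

lemma fderiv_tiling {u : ℝ × ℝ → F} (hu : Differentiable ℝ u) (N : ℕ) (p : ℝ × ℝ) :
    fderiv ℝ (tiling N u) p = ∑ k ∈ Finset.range N ×ˢ Finset.range N,
      fderiv ℝ (fun q => u ((N : ℝ) • q - gridPoint k)) p :=
  fderiv_fun_sum fun _ _ => (hu.comp (by fun_prop)).differentiableAt

lemma seminorm_fderiv_tiling (P : Seminorm ℝ (ℝ × ℝ →L[ℝ] F)) {u : ℝ × ℝ → F}
    (hu : Differentiable ℝ u) (hsupp : tsupport u ⊆ Metric.ball 0 (1 / 2)) (N : ℕ)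
    (p : ℝ × ℝ) : P (fderiv ℝ (tiling N u) p) = ∑ k ∈ Finset.range N ×ˢ Finset.range N,
      P (fderiv ℝ (fun q => u ((N : ℝ) • q - gridPoint k)) p) := by
  simp only [fderiv_tiling hu, fderiv_comp_smul_sub]
  refine map_sum_gridPoint (Φ := P) (w := fun q => (N : ℝ) • fderiv ℝ u q) (map_zero P) ?_ _ _
  exact (Function.support_const_smul_subset (N : ℝ) (fderiv ℝ u)).trans
    ((support_fderiv_subset ℝ).trans hsupp)

/-- The `N²` shrunken copies of `u` contribute `energy P u / N` each. -/
lemma energy_tiling {P : Seminorm ℝ (ℝ × ℝ →L[ℝ] F)} (hP : Continuous P) {u : ℝ × ℝ → F}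
    (hu : ContDiff ℝ 1 u) (hsupp : tsupport u ⊆ Metric.ball 0 (1 / 2)) (N : ℕ) :
    energy P (tiling N u) = N * energy P u := by
  rcases N.eq_zero_or_pos with rfl | hN
  · simp [energy, seminorm_fderiv_tiling P (hu.differentiable one_ne_zero) hsupp]
  have hN : (0 : ℝ) < N := by exact_mod_cast hN
  have hu' := integrable_fderiv_of_hasCompactSupport hu
    (hasCompactSupport_of_tsupport_subset_ball hsupp)
  have hcopy (k : ℕ × ℕ) := integrable_seminorm_comp hP
    (integrable_fderiv_comp_smul_sub hu' hN.ne' (gridPoint k))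
  calc energy P (tiling N u)
      = ∑ k ∈ Finset.range N ×ˢ Finset.range N,
          energy P fun q => u ((N : ℝ) • q - gridPoint k) := by
        simp only [energy, seminorm_fderiv_tiling P (hu.differentiable one_ne_zero) hsupp]
        exact integral_finsetSum _ fun k _ => hcopy k
    _ = N * energy P u := by
        simp only [energy_comp_smul_sub P u hN, Finset.sum_const, Finset.card_product,
          Finset.card_range, Module.finrank_prod, Module.finrank_self, nsmul_eq_mul]
        push_cast
        field_simp

/-- The energies of the tiling grow linearly in `N`, so they eventually absorb those of `v`. -/
lemma exists_energy_add_tiling_le {P Q : Seminorm ℝ (ℝ × ℝ →L[ℝ] F)} (hP : Continuous P)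
    (hQ : Continuous Q) {u v : ℝ × ℝ → F} (hu : ContDiff ℝ 1 u)
    (hsupp : tsupport u ⊆ Metric.ball 0 (1 / 2)) (hv : Differentiable ℝ v)
    (hv' : Integrable (fderiv ℝ v)) {c : ℝ} (hc₀ : 0 ≤ c) (h : c * energy Q u < energy P u) :
    ∃ N : ℕ, c * energy Q (v + tiling N u) ≤ energy P (v + tiling N u) := by
  obtain ⟨N, hN⟩ := exists_nat_ge
    ((energy P v + c * energy Q v) / (energy P u - c * energy Q u))
  rw [div_le_iff₀ (sub_pos.2 h)] at hN
  have hT : ContDiff ℝ 1 (tiling N u) := contDiff_tiling hu N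
  have hT' := integrable_fderiv_of_hasCompactSupport hT
    (hasCompactSupport_tiling ((subset_tsupport u).trans hsupp) N)
  have hTd := hT.differentiable one_ne_zero
  refine ⟨N, ?_⟩
  calc c * energy Q (v + tiling N u)
      ≤ c * (energy Q v + energy Q (tiling N u)) := by
        gcongr
        exact energy_add_le hQ hv hTd hv' hT'
    _ ≤ energy P (tiling N u) - energy P v := by
        rw [energy_tiling hP hu hsupp, energy_tiling hQ hu hsupp]
        linarith
    _ ≤ energy P (v + tiling N u) := energy_sub_le_energy_add hP hv hTd hv' hT'

end Tiling

section Operators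

/-- The Euclidean norm `emag` as a seminorm on `ℝ × ℝ`, whose own norm is the supremum norm. -/
def emagSeminorm : Seminorm ℝ (ℝ × ℝ) :=
  (normSeminorm ℝ ℂ).comp (Complex.equivRealProdCLM.symm : ℝ × ℝ →L[ℝ] ℂ).toLinearMap

lemma emagSeminorm_apply (v : ℝ × ℝ) : emagSeminorm v = emag v := by
  simp [emagSeminorm, emag, Complex.norm_eq_sqrt_sq_add_sq]

lemma emag_smul (c : ℝ) (v : ℝ × ℝ) : emag (c • v) = |c| * emag v := by
  simp only [← emagSeminorm_apply, map_smul_eq_mul, Real.norm_eq_abs]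

lemma continuous_emag : Continuous emag := by
  unfold emag
  fun_prop

lemma abs_snd_le_emag (v : ℝ × ℝ) : |v.2| ≤ emag v :=
  Real.abs_le_sqrt (le_add_of_nonneg_left (sq_nonneg _))

/-- The gradient `∇ϱ` of the first component of `V = (ϱ, ψ)`, as a function of the derivative
of `V`. -/
def gradFst : (ℝ × ℝ →L[ℝ] ℝ × ℝ) →L[ℝ] ℝ × ℝ where
  toFun A := ((A (1, 0)).1, (A (0, 1)).1)
  map_add' _ _ := rfl
  map_smul' _ _ := rfl

/-- The field `∇ϱ + ∇^⊥ψ`, where `∇^⊥ψ = (∂₂ψ, -∂₁ψ)`, as a function of the derivative of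
`V = (ϱ, ψ)`. It is the flux `ϱ b` of the solutions constructed below. -/
def flux : (ℝ × ℝ →L[ℝ] ℝ × ℝ) →L[ℝ] ℝ × ℝ where
  toFun A := ((A (1, 0)).1 + (A (0, 1)).2, (A (0, 1)).1 - (A (1, 0)).2)
  map_add' _ _ := by
    ext <;> simp only [add_apply, Prod.fst_add, Prod.snd_add, Prod.mk_add_mk] <;> ring
  map_smul' _ _ := by
    ext <;> simp only [smul_apply, Prod.smul_fst, Prod.smul_snd, smul_eq_mul, RingHom.id_apply] <;>
      ring

lemma gradFst_apply (A : ℝ × ℝ →L[ℝ] ℝ × ℝ) : gradFst A = ((A (1, 0)).1, (A (0, 1)).1) := rfl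

lemma flux_apply (A : ℝ × ℝ →L[ℝ] ℝ × ℝ) :
    flux A = ((A (1, 0)).1 + (A (0, 1)).2, (A (0, 1)).1 - (A (1, 0)).2) := rfl

/-- The Euclidean norm of a vector depending linearly on the derivative. -/
def emagComp (L : (ℝ × ℝ →L[ℝ] ℝ × ℝ) →L[ℝ] ℝ × ℝ) : Seminorm ℝ (ℝ × ℝ →L[ℝ] ℝ × ℝ) :=
  emagSeminorm.comp L.toLinearMap

lemma emagComp_apply (L : (ℝ × ℝ →L[ℝ] ℝ × ℝ) →L[ℝ] ℝ × ℝ) (A : ℝ × ℝ →L[ℝ] ℝ × ℝ) :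
    emagComp L A = emag (L A) :=
  emagSeminorm_apply _

lemma continuous_emagComp (L : (ℝ × ℝ →L[ℝ] ℝ × ℝ) →L[ℝ] ℝ × ℝ) : Continuous (emagComp L) :=
  (continuous_emag.comp L.continuous).congr fun A => (emagComp_apply L A).symm

lemma gradFst_fderiv {V : ℝ × ℝ → ℝ × ℝ} {p : ℝ × ℝ} (hV : DifferentiableAt ℝ V p) :
    gradFst (fderiv ℝ V p) = (pd1 (fun q => (V q).1) p, pd2 (fun q => (V q).1) p) := by
  simp [gradFst_apply, pd1, pd2, fderiv.fst hV]

end Operators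

section WeakEquation

lemma integral_fderiv_apply_eq_zero {E : Type*} [NormedAddCommGroup E] [NormedSpace ℝ E]
    [FiniteDimensional ℝ E] [MeasurableSpace E] [BorelSpace E] {μ : Measure E}
    [μ.IsAddHaarMeasure] {f : E → ℝ} (hf : ContDiff ℝ 1 f) (hc : HasCompactSupport f) (v : E) :
    ∫ x, fderiv ℝ f x v ∂μ = 0 := by
  have hi : Integrable (fun x => fderiv ℝ f x v) μ :=
    ((hf.continuous_fderiv one_ne_zero).clm_apply continuous_const).integrable_of_hasCompactSupport
      (hc.fderiv_apply ℝ v)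
  have h := integral_mul_fderiv_eq_neg_fderiv_mul_of_integrable (μ := μ) (f := fun _ => (1 : ℝ))
    (g := f) (v := v) (by simp) (by simpa using hi)
    (by simpa using hf.continuous.integrable_of_hasCompactSupport hc)
    (fun _ _ => differentiableAt_const _) (fun x _ => hf.differentiable one_ne_zero x)
  simpa using h

lemma integral_divergence_eq_zero {f g : ℝ × ℝ → ℝ} (hf : ContDiff ℝ 1 f)
    (hfc : HasCompactSupport f) (hg : ContDiff ℝ 1 g) (hgc : HasCompactSupport g) :
    ∫ p, (pd1 f p + pd2 g p) = 0 := by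
  have hint {h : ℝ × ℝ → ℝ} (hh : ContDiff ℝ 1 h) (hhc : HasCompactSupport h) (v : ℝ × ℝ) :
      Integrable fun p => fderiv ℝ h p v :=
    (integrable_fderiv_of_hasCompactSupport hh hhc).apply_continuousLinearMap v
  simp only [pd1, pd2]
  rw [integral_add (hint hf hfc _) (hint hg hgc _), integral_fderiv_apply_eq_zero hf hfc,
    integral_fderiv_apply_eq_zero hg hgc, add_zero]

lemma pd2_pd1_eq_pd1_pd2 {φ : ℝ × ℝ → ℝ} (hφ : ContDiff ℝ 2 φ) (p : ℝ × ℝ) :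
    pd2 (pd1 φ) p = pd1 (pd2 φ) p := by
  have hsymm := (hφ.contDiffAt (x := p)).isSymmSndFDerivAt (by simp)
  have hd : DifferentiableAt ℝ (fderiv ℝ φ) p :=
    (hφ.fderiv_right (m := 1) (by norm_num)).differentiable one_ne_zero p
  unfold pd1 pd2
  rw [fderiv_clm_apply hd (by fun_prop), fderiv_clm_apply hd (by fun_prop)]
  simpa using hsymm (0, 1) (1, 0)

lemma fderiv_apply_eq_pd1_add_pd2 (φ : ℝ × ℝ → ℝ) (p v : ℝ × ℝ) :
    fderiv ℝ φ p v = pd1 φ p * v.1 + pd2 φ p * v.2 := by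
  have hv : v = v.1 • ((1, 0) : ℝ × ℝ) + v.2 • ((0, 1) : ℝ × ℝ) := by ext <;> simp
  conv_lhs => rw [hv, map_add, map_smul, map_smul, smul_eq_mul, smul_eq_mul]
  simp only [pd1, pd2, mul_comm]

/-- The integrand is the divergence of `ϱ ∇φ - ψ ∇^⊥φ`, where `V = (ϱ, ψ)`. -/
lemma integral_laplacian_mul_add_flux_eq_zero {V : ℝ × ℝ → ℝ × ℝ} (hV : ContDiff ℝ 1 V)
    {φ : ℝ × ℝ → ℝ} (hφ : ContDiff ℝ 2 φ) (hc : HasCompactSupport φ) :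
    ∫ p, ((pd1 (pd1 φ) p + pd2 (pd2 φ) p) * (V p).1 + fderiv ℝ φ p (flux (fderiv ℝ V p))) =
      0 := by
  have hφ' : ContDiff ℝ 1 (fderiv ℝ φ) := hφ.fderiv_right (by norm_num)
  have hφ₁ : ContDiff ℝ 1 (pd1 φ) := hφ'.clm_apply contDiff_const
  have hφ₂ : ContDiff ℝ 1 (pd2 φ) := hφ'.clm_apply contDiff_const
  have hc₁ : HasCompactSupport (pd1 φ) := hc.fderiv_apply ℝ _
  have hc₂ : HasCompactSupport (pd2 φ) := hc.fderiv_apply ℝ _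
  have hdiv := integral_divergence_eq_zero
    ((hφ₁.mul hV.fst).sub (hφ₂.mul hV.snd)) (hc₁.mul_right.sub hc₂.mul_right)
    ((hφ₂.mul hV.fst).add (hφ₁.mul hV.snd)) (hc₂.mul_right.add hc₁.mul_right)
  rw [← hdiv]
  congr 1 with p
  have hVp : DifferentiableAt ℝ V p := hV.differentiable one_ne_zero p
  have d₁ : DifferentiableAt ℝ (pd1 φ) p := hφ₁.differentiable one_ne_zero p
  have d₂ : DifferentiableAt ℝ (pd2 φ) p := hφ₂.differentiable one_ne_zero p
  have hsymm := pd2_pd1_eq_pd1_pd2 hφ p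
  rw [fderiv_apply_eq_pd1_add_pd2]
  -- The first derivatives of `φ` are made opaque, so that only the outer ones get unfolded.
  clear hdiv hc₁ hc₂ hφ₁ hφ₂
  generalize pd1 φ = a at *
  generalize pd2 φ = b at *
  simp only [pd1, pd2] at hsymm ⊢
  simp only [flux_apply, fderiv_fun_add, fderiv_fun_sub, fderiv_fun_mul, d₁, d₂, hVp.fst, hVp.snd,
    fderiv.fst hVp, fderiv.snd hVp, DifferentiableAt.fun_mul, hsymm, add_apply, sub_apply,
    smul_apply, ContinuousLinearMap.comp_apply, ContinuousLinearMap.coe_fst',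
    ContinuousLinearMap.coe_snd', smul_eq_mul]
  ring

end WeakEquation

section Radial

/-- The squared Euclidean norm on `ℝ × ℝ`. -/
def emagSq (p : ℝ × ℝ) : ℝ := p.1 ^ 2 + p.2 ^ 2

lemma emagSq_nonneg (p : ℝ × ℝ) : 0 ≤ emagSq p := by
  unfold emagSq
  positivity

lemma contDiff_emagSq {n : WithTop ℕ∞} : ContDiff ℝ n emagSq := by
  unfold emagSq
  fun_prop

lemma emagSq_smul (c : ℝ) (p : ℝ × ℝ) : emagSq (c • p) = c ^ 2 * emagSq p := by
  simp only [emagSq, Prod.smul_fst, Prod.smul_snd, smul_eq_mul]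
  ring

lemma norm_sq_le_emagSq (p : ℝ × ℝ) : ‖p‖ ^ 2 ≤ emagSq p := by
  rcases max_choice ‖p.1‖ ‖p.2‖ with h | h <;>
    rw [Prod.norm_def, h, Real.norm_eq_abs, sq_abs, emagSq] <;> nlinarith

lemma emagSq_le_two_mul_norm_sq (p : ℝ × ℝ) : emagSq p ≤ 2 * ‖p‖ ^ 2 := by
  have h₁ := pow_le_pow_left₀ (abs_nonneg _) (norm_fst_le p) 2
  have h₂ := pow_le_pow_left₀ (abs_nonneg _) (norm_snd_le p) 2
  rw [Real.norm_eq_abs, sq_abs] at h₁ h₂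
  rw [emagSq]
  linarith

lemma hasFDerivAt_emagSq (p : ℝ × ℝ) :
    HasFDerivAt emagSq ((2 * p.1) • ContinuousLinearMap.fst ℝ ℝ ℝ +
      (2 * p.2) • ContinuousLinearMap.snd ℝ ℝ ℝ) p := by
  have hfst : HasFDerivAt Prod.fst (ContinuousLinearMap.fst ℝ ℝ ℝ) p := hasFDerivAt_fst
  have hsnd : HasFDerivAt Prod.snd (ContinuousLinearMap.snd ℝ ℝ ℝ) p := hasFDerivAt_snd
  simpa using! (hfst.pow 2).add (hsnd.pow 2)

lemma norm_fderiv_emagSq_le (p : ℝ × ℝ) : ‖fderiv ℝ emagSq p‖ ≤ 2 * (emagSq p + 1) := by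
  rw [(hasFDerivAt_emagSq p).fderiv]
  calc _ ≤ |2 * p.1| * 1 + |2 * p.2| * 1 := by
        refine norm_add_le_of_le ?_ ?_ <;> rw [norm_smul, Real.norm_eq_abs] <;> gcongr
        · exact ContinuousLinearMap.norm_fst_le ℝ ℝ ℝ
        · exact ContinuousLinearMap.norm_snd_le ℝ ℝ ℝ
    _ ≤ (p.1 ^ 2 + 1) + (p.2 ^ 2 + 1) := by
        simp only [abs_mul, abs_two, mul_one]
        gcongr
        · nlinarith [sq_nonneg (|p.1| - 1), sq_abs p.1]
        · nlinarith [sq_nonneg (|p.2| - 1), sq_abs p.2]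
    _ = emagSq p + 2 := by
        rw [emagSq]
        ring
    _ ≤ 2 * (emagSq p + 1) := by linarith [emagSq_nonneg p]

/-- The radial vector field `U(|p|²) p`. -/
def radialField (U : ℝ → ℝ) (p : ℝ × ℝ) : ℝ × ℝ := U (emagSq p) • p

lemma fderiv_radialField_apply {U : ℝ → ℝ} {U' : ℝ} {p : ℝ × ℝ}
    (hU : HasDerivAt U U' (emagSq p)) (v : ℝ × ℝ) :
    fderiv ℝ (radialField U) p v =
      U (emagSq p) • v + (U' * (2 * p.1 * v.1 + 2 * p.2 * v.2)) • p := by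
  have h := (hU.comp_hasFDerivAt p (hasFDerivAt_emagSq p)).smul (hasFDerivAt_id p)
  rw [show radialField U = (U ∘ emagSq) • id from rfl, h.fderiv]
  simp [mul_add]

/-- A radial field is curl free, so its flux has only the divergence component. -/
lemma flux_fderiv_radialField {U : ℝ → ℝ} {U' : ℝ} {p : ℝ × ℝ}
    (hU : HasDerivAt U U' (emagSq p)) :
    flux (fderiv ℝ (radialField U) p) = (2 * (U (emagSq p) + emagSq p * U'), 0) := by
  simp only [flux_apply, fderiv_radialField_apply hU, emagSq, Prod.fst_add, Prod.snd_add,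
    Prod.smul_fst, Prod.smul_snd, smul_eq_mul]
  ext <;> ring

lemma gradFst_fderiv_radialField_snd {U : ℝ → ℝ} {U' : ℝ} {p : ℝ × ℝ}
    (hU : HasDerivAt U U' (emagSq p)) :
    (gradFst (fderiv ℝ (radialField U) p)).2 = 2 * U' * (p.1 * p.2) := by
  simp only [gradFst_apply, fderiv_radialField_apply hU, Prod.fst_add, Prod.smul_fst, smul_eq_mul]
  ring

end Radial

section SphereDensity

/-- The density `a / (|p|² + a)²`, a constant multiple of the area density of the sphere in the
stereographic coordinate `p / √a`. -/
def sphereDensity (a : ℝ) (p : ℝ × ℝ) : ℝ := a / (emagSq p + a) ^ 2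

lemma emagSq_add_pos {a : ℝ} (ha : 0 < a) (p : ℝ × ℝ) : 0 < emagSq p + a :=
  add_pos_of_nonneg_of_pos (emagSq_nonneg p) ha

lemma sphereDensity_pos {a : ℝ} (ha : 0 < a) (p : ℝ × ℝ) : 0 < sphereDensity a p :=
  div_pos ha (pow_pos (emagSq_add_pos ha p) 2)

lemma contDiff_sphereDensity {n : WithTop ℕ∞} {a : ℝ} (ha : 0 < a) :
    ContDiff ℝ n (sphereDensity a) :=
  contDiff_const.div ((contDiff_emagSq.add contDiff_const).pow 2) fun p =>
    (pow_pos (emagSq_add_pos ha p) 2).ne'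

lemma integrable_sphereDensity_one : Integrable (sphereDensity 1) := by
  have hdom := integrable_rpow_neg_one_add_norm_sq (E := ℝ × ℝ) (μ := volume) (r := 4)
    (by norm_num [Module.finrank_prod])
  refine hdom.mono'
    (contDiff_sphereDensity (n := 0) one_pos).continuous.aestronglyMeasurable ?_
  filter_upwards with p
  rw [Real.norm_of_nonneg (sphereDensity_pos one_pos p).le, sphereDensity, one_div,
    show (-4 / 2 : ℝ) = -((2 : ℕ) : ℝ) by norm_num, Real.rpow_neg (by positivity),
    Real.rpow_natCast, add_comm (emagSq p)]
  gcongr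
  exact norm_sq_le_emagSq p

lemma sphereDensity_eq_rescale {a : ℝ} (ha : 0 < a) (p : ℝ × ℝ) :
    sphereDensity a p = a⁻¹ * sphereDensity 1 ((√a)⁻¹ • p) := by
  have := emagSq_add_pos ha p
  rw [sphereDensity, sphereDensity, emagSq_smul, inv_pow, Real.sq_sqrt ha.le,
    show a⁻¹ * emagSq p + 1 = (emagSq p + a) / a by field_simp]
  field_simp

lemma integrable_sphereDensity {a : ℝ} (ha : 0 < a) : Integrable (sphereDensity a) := by
  rw [funext (sphereDensity_eq_rescale ha)]
  exact (integrable_sphereDensity_one.comp_smul (inv_ne_zero (Real.sqrt_pos.2 ha).ne')).const_mul _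

lemma integral_sphereDensity {a : ℝ} (ha : 0 < a) :
    ∫ p, sphereDensity a p = ∫ p, sphereDensity 1 p := by
  simp only [sphereDensity_eq_rescale ha, integral_const_mul]
  rw [Measure.integral_comp_inv_smul volume (sphereDensity 1), Module.finrank_prod,
    Module.finrank_self, one_add_one_eq_two, Real.sq_sqrt ha.le, abs_of_pos ha, smul_eq_mul,
    inv_mul_cancel_left₀ ha.ne']

lemma le_sphereDensity_one {p : ℝ × ℝ} (hp : ‖p‖ ≤ 2) : 1 / 81 ≤ sphereDensity 1 p := by
  have h₁ := emagSq_le_two_mul_norm_sq p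
  have h₂ := pow_le_pow_left₀ (norm_nonneg p) hp 2
  have h₃ := emagSq_nonneg p
  rw [sphereDensity, show (81 : ℝ) = (8 + 1) ^ 2 by norm_num]
  gcongr
  linarith

lemma norm_fderiv_sphereDensity_one_le (p : ℝ × ℝ) :
    ‖fderiv ℝ (sphereDensity 1) p‖ ≤ 4 * sphereDensity 1 p := by
  have hs := emagSq_add_pos one_pos p
  have hinv : HasDerivAt (fun s : ℝ => 1 / (s + 1) ^ 2) (-2 / (emagSq p + 1) ^ 3) (emagSq p) := by
    have hsq := ((hasDerivAt_id (emagSq p)).add_const 1).fun_pow 2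
    convert! hsq.fun_inv (pow_pos hs 2).ne' using 1
    · simp
    · simp only [Nat.cast_ofNat, id_eq, Nat.add_one_sub_one, pow_one, mul_one]
      field_simp
  have hderiv := hinv.comp_hasFDerivAt p
    (contDiff_emagSq.differentiable (n := 1) one_ne_zero p).hasFDerivAt
  rw [show sphereDensity 1 = (fun s : ℝ => 1 / (s + 1) ^ 2) ∘ emagSq from rfl, hderiv.fderiv,
    norm_smul, norm_div, norm_neg, Real.norm_two, norm_pow, Real.norm_of_nonneg hs.le]
  calc 2 / (emagSq p + 1) ^ 3 * ‖fderiv ℝ emagSq p‖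
      ≤ 2 / (emagSq p + 1) ^ 3 * (2 * (emagSq p + 1)) := by
        gcongr
        exact norm_fderiv_emagSq_le p
    _ = 4 * ((fun s : ℝ => 1 / (s + 1) ^ 2) ∘ emagSq) p := by
      simp only [Function.comp_apply]
      field_simp
      norm_num

lemma integrable_fderiv_sphereDensity_one : Integrable (fderiv ℝ (sphereDensity 1)) := by
  refine (integrable_sphereDensity_one.const_mul 4).mono'
    ((contDiff_sphereDensity (n := 1) one_pos).continuous_fderiv one_ne_zero).aestronglyMeasurable
    (.of_forall norm_fderiv_sphereDensity_one_le)

end SphereDensity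

section Truncation

/-- A smooth cutoff on `ℝ`, equal to `1` on `(-∞, 1/8]` and to `0` on `[3/16, ∞)`. -/
def cutoff (s : ℝ) : ℝ := Real.smoothTransition (3 - 16 * s)

lemma cutoff_eq_one {s : ℝ} (hs : s ≤ 1 / 8) : cutoff s = 1 :=
  Real.smoothTransition.one_of_one_le (by linarith)

lemma cutoff_eq_zero {s : ℝ} (hs : 3 / 16 ≤ s) : cutoff s = 0 :=
  Real.smoothTransition.zero_of_nonpos (by linarith)

lemma cutoff_nonneg (s : ℝ) : 0 ≤ cutoff s := Real.smoothTransition.nonneg _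

lemma cutoff_le_one (s : ℝ) : cutoff s ≤ 1 := Real.smoothTransition.le_one _

lemma contDiff_cutoff {n : ℕ∞} : ContDiff ℝ n cutoff :=
  Real.smoothTransition.contDiff.comp (by fun_prop)

lemma deriv_cutoff_eq_zero_of_le {s : ℝ} (hs : s ≤ 1 / 8) : deriv cutoff s = 0 :=
  IsLocalMax.deriv_eq_zero <| .of_forall fun t => (cutoff_le_one t).trans_eq (cutoff_eq_one hs).symm

lemma deriv_cutoff_eq_zero_of_ge {s : ℝ} (hs : 3 / 16 ≤ s) : deriv cutoff s = 0 :=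
  IsLocalMin.deriv_eq_zero <| .of_forall fun t => (cutoff_eq_zero hs).trans_le (cutoff_nonneg t)

lemma integrable_abs_deriv_cutoff : Integrable fun p => |deriv cutoff (emagSq p)| := by
  have hcont : Continuous fun p => |deriv cutoff (emagSq p)| :=
    (((contDiff_cutoff (n := 1)).continuous_deriv le_rfl).comp
      (contDiff_emagSq (n := 0)).continuous).abs
  refine hcont.integrable_of_hasCompactSupport
    (HasCompactSupport.intro (isCompact_closedBall 0 1) fun p hp => ?_)
  rw [mem_closedBall_zero_iff, not_le] at hp
  rw [deriv_cutoff_eq_zero_of_ge (by nlinarith [norm_sq_le_emagSq p]), abs_zero]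

/-- The profile `U` for which `U(|p|²) p` is a truncation of the singular field `p / |p|²`, at
infinity by `cutoff` and at the origin at the scale `√a`. -/
def truncatedProfile (a s : ℝ) : ℝ := cutoff s / (s + a)

lemma contDiff_radialField_truncatedProfile {n : ℕ∞} {a : ℝ} (ha : 0 < a) :
    ContDiff ℝ n (radialField (truncatedProfile a)) :=
  ((contDiff_cutoff.comp contDiff_emagSq).div (contDiff_emagSq.add contDiff_const)
    fun p => (emagSq_add_pos ha p).ne').smul contDiff_id

lemma tsupport_radialField_truncatedProfile_subset (a : ℝ) :
    tsupport (radialField (truncatedProfile a)) ⊆ Metric.ball 0 (1 / 2) := by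
  have hclosed : IsClosed {p | emagSq p ≤ 3 / 16} :=
    isClosed_le (contDiff_emagSq (n := 0)).continuous continuous_const
  refine (closure_minimal (fun p hp => ?_) hclosed).trans fun p (hp : emagSq p ≤ 3 / 16) => ?_
  · by_contra h
    have hcut := cutoff_eq_zero (lt_of_not_ge h).le
    exact hp (by simp [radialField, truncatedProfile, hcut])
  · rw [mem_ball_zero_iff]
    nlinarith [norm_sq_le_emagSq p, norm_nonneg p]

lemma hasDerivAt_truncatedProfile {a s : ℝ} (h : s + a ≠ 0) :
    HasDerivAt (truncatedProfile a)
      ((deriv cutoff s * (s + a) - cutoff s) / (s + a) ^ 2) s := by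
  have hcut : HasDerivAt cutoff (deriv cutoff s) s :=
    ((contDiff_cutoff (n := 1)).differentiable one_ne_zero s).hasDerivAt
  simpa using! hcut.div ((hasDerivAt_id s).add_const a) h

lemma emag_flux_truncated_le {a : ℝ} (ha : 0 < a) (p : ℝ × ℝ) :
    emag (flux (fderiv ℝ (radialField (truncatedProfile a)) p)) ≤
      2 * (|deriv cutoff (emagSq p)| + sphereDensity a p) := by
  have hs := emagSq_nonneg p
  have hsa := emagSq_add_pos ha p
  have hfrac : emagSq p / (emagSq p + a) ≤ 1 := (div_le_one hsa).2 (by linarith)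
  have hdens := (sphereDensity_pos ha p).le
  have hdiv : truncatedProfile a (emagSq p) + emagSq p *
      ((deriv cutoff (emagSq p) * (emagSq p + a) - cutoff (emagSq p)) / (emagSq p + a) ^ 2) =
      deriv cutoff (emagSq p) * (emagSq p / (emagSq p + a)) +
        cutoff (emagSq p) * sphereDensity a p := by
    rw [truncatedProfile, sphereDensity]
    field_simp
    ring
  rw [flux_fderiv_radialField (hasDerivAt_truncatedProfile hsa.ne'), hdiv, emag]
  simp only [ne_eq, OfNat.ofNat_ne_zero, not_false_eq_true, zero_pow, add_zero, Real.sqrt_sq_eq_abs]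
  rw [abs_mul, abs_two]
  gcongr
  refine (abs_add_le _ _).trans (add_le_add ?_ ?_)
  · rw [abs_mul, abs_of_nonneg (div_nonneg hs hsa.le)]
    exact mul_le_of_le_one_right (abs_nonneg _) hfrac
  · rw [abs_of_nonneg (mul_nonneg (cutoff_nonneg _) hdens)]
    exact mul_le_of_le_one_left hdens (cutoff_le_one _)

lemma integrable_fderiv_truncated {a : ℝ} (ha : 0 < a) :
    Integrable (fderiv ℝ (radialField (truncatedProfile a))) :=
  integrable_fderiv_of_hasCompactSupport (contDiff_radialField_truncatedProfile (n := 1) ha)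
    (hasCompactSupport_of_tsupport_subset_ball (tsupport_radialField_truncatedProfile_subset a))

/-- The bound does not depend on the scale `a`, since `sphereDensity a` has constant mass. -/
lemma energy_flux_truncated_le {a : ℝ} (ha : 0 < a) :
    energy (emagComp flux) (radialField (truncatedProfile a)) ≤
      2 * ((∫ p, |deriv cutoff (emagSq p)|) + ∫ p, sphereDensity 1 p) := by
  have hdens := integrable_sphereDensity ha
  rw [← integral_sphereDensity ha, ← integral_add integrable_abs_deriv_cutoff hdens,
    ← integral_const_mul]
  refine integral_mono (integrable_seminorm_comp (continuous_emagComp flux)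
    (integrable_fderiv_truncated ha)) ((integrable_abs_deriv_cutoff.add hdens).const_mul 2)
    fun p => ?_
  simpa only [emagComp_apply] using emag_flux_truncated_le ha p

end Truncation

section DyadicSquares

lemma card_mul_le_integral_of_pairwiseDisjoint {α ι : Type*} [MeasurableSpace α] {μ : Measure α}
    {f : α → ℝ} (hf : Integrable f μ) (hf₀ : 0 ≤ᵐ[μ] f) {t : Finset ι} {s : ι → Set α}
    (hs : ∀ i ∈ t, MeasurableSet (s i)) (hdisj : (t : Set ι).PairwiseDisjoint s) {c : ℝ}
    (hc : ∀ i ∈ t, c ≤ ∫ x in s i, f x ∂μ) : t.card * c ≤ ∫ x, f x ∂μ :=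
  calc t.card * c ≤ ∑ i ∈ t, ∫ x in s i, f x ∂μ := by
        simpa only [nsmul_eq_mul] using Finset.card_nsmul_le_sum t _ c hc
    _ = ∫ x in ⋃ i ∈ t, s i, f x ∂μ :=
        (integral_biUnion_finset t hs hdisj fun _ _ => hf.integrableOn).symm
    _ ≤ ∫ x, f x ∂μ := setIntegral_le_integral hf hf₀

/-- The square `(q/2, q]²`. -/
def dyadicSquare (q : ℝ) : Set (ℝ × ℝ) := Set.Ioc (q / 2) q ×ˢ Set.Ioc (q / 2) q

lemma measurableSet_dyadicSquare (q : ℝ) : MeasurableSet (dyadicSquare q) :=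
  measurableSet_Ioc.prod measurableSet_Ioc

lemma volume_real_dyadicSquare {q : ℝ} (hq : 0 ≤ q) :
    volume.real (dyadicSquare q) = q ^ 2 / 4 := by
  rw [dyadicSquare, Measure.volume_eq_prod, measureReal_prod_prod,
    Real.volume_real_Ioc_of_le (half_le_self hq)]
  ring

lemma pairwise_disjoint_dyadicSquare :
    Pairwise (Function.onFun Disjoint fun k : ℕ => dyadicSquare ((1 / 2) ^ (k + 2))) := by
  have hanti : Antitone fun k : ℕ => (1 / 2 : ℝ) ^ (k + 2) := fun i j hij =>
    pow_le_pow_of_le_one (by norm_num) (by norm_num) (by gcongr)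
  intro i j hij
  have hIoc := hanti.pairwise_disjoint_on_Ioc_succ hij
  simp only [Function.onFun, Order.succ_eq_add_one] at hIoc
  refine Set.disjoint_prod.2 (Or.inl ?_)
  convert! hIoc using 2 <;> ring

lemma le_emag_gradFst_truncated {a q : ℝ} (ha : 0 < a) (haq : a ≤ q ^ 2) (hq : 0 < q)
    (hq' : q ≤ 1 / 4) {p : ℝ × ℝ} (hp : p ∈ dyadicSquare q) :
    1 / (18 * q ^ 2) ≤ emag (gradFst (fderiv ℝ (radialField (truncatedProfile a)) p)) := by
  obtain ⟨⟨hx, hx'⟩, ⟨hy, hy'⟩⟩ := hp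
  have hsa := emagSq_add_pos ha p
  have hs : emagSq p ≤ 2 * q ^ 2 := by
    unfold emagSq
    nlinarith
  have hs' : emagSq p ≤ 1 / 8 := by nlinarith
  have hxy : q ^ 2 / 4 ≤ p.1 * p.2 := by nlinarith
  have hxy₀ : 0 ≤ p.1 * p.2 := (by positivity : 0 ≤ q ^ 2 / 4).trans hxy
  calc 1 / (18 * q ^ 2) = 2 * (q ^ 2 / 4) / (3 * q ^ 2) ^ 2 := by
        field_simp
        norm_num
    _ ≤ 2 * (p.1 * p.2) / (emagSq p + a) ^ 2 := by
        have : emagSq p + a ≤ 3 * q ^ 2 := by linarith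
        gcongr
    _ = |(gradFst (fderiv ℝ (radialField (truncatedProfile a)) p)).2| := by
        rw [gradFst_fderiv_radialField_snd (hasDerivAt_truncatedProfile hsa.ne'),
          deriv_cutoff_eq_zero_of_le hs', cutoff_eq_one hs', ← abs_neg,
          show -(2 * ((0 * (emagSq p + a) - 1) / (emagSq p + a) ^ 2) * (p.1 * p.2)) =
            2 * (p.1 * p.2) / (emagSq p + a) ^ 2 by ring, abs_of_nonneg (by positivity)]
    _ ≤ _ := abs_snd_le_emag _

lemma le_setIntegral_dyadicSquare {a q : ℝ} (ha : 0 < a) (haq : a ≤ q ^ 2) (hq : 0 < q)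
    (hq' : q ≤ 1 / 4) : 1 / 72 ≤ ∫ p in dyadicSquare q,
      emagComp gradFst (fderiv ℝ (radialField (truncatedProfile a)) p) := by
  have hint := integrable_seminorm_comp (continuous_emagComp gradFst)
    (integrable_fderiv_truncated ha)
  have hfin : volume (dyadicSquare q) ≠ ⊤ := by
    rw [dyadicSquare, Measure.volume_eq_prod, Measure.prod_prod]
    exact ENNReal.mul_ne_top measure_Ioc_lt_top.ne measure_Ioc_lt_top.ne
  have hbound := setIntegral_ge_of_const_le (measurableSet_dyadicSquare q) hfin
    (fun p hp => (le_emag_gradFst_truncated ha haq hq hq' hp).trans_eq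
      (emagComp_apply gradFst _).symm) hint.integrableOn
  rw [volume_real_dyadicSquare hq.le, smul_eq_mul] at hbound
  refine le_trans (le_of_eq ?_) hbound
  field_simp
  norm_num

/-- As `|∇ϱ|` is of order `|p|⁻²` away from the scale `√a`, each of the `K` dyadic squares of side
at least `√a` contributes a fixed amount. -/
lemma le_energy_gradFst_truncated {a : ℝ} (ha : 0 < a) {K : ℕ}
    (haK : a ≤ ((1 / 2) ^ (K + 2)) ^ 2) :
    K * (1 / 72) ≤ energy (emagComp gradFst) (radialField (truncatedProfile a)) := by
  rw [← Finset.card_range K]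
  refine card_mul_le_integral_of_pairwiseDisjoint
    (integrable_seminorm_comp (continuous_emagComp gradFst) (integrable_fderiv_truncated ha))
    (.of_forall fun p => apply_nonneg _ _) (fun k _ => measurableSet_dyadicSquare _)
    (pairwise_disjoint_dyadicSquare.set_pairwise _) fun k hk => ?_
  have hkK : (1 / 2 : ℝ) ^ (K + 2) ≤ (1 / 2) ^ (k + 2) :=
    pow_le_pow_of_le_one (by norm_num) (by norm_num) (by linarith [Finset.mem_range.1 hk])
  refine le_setIntegral_dyadicSquare ha (haK.trans (by gcongr)) (by positivity) ?_
  calc (1 / 2 : ℝ) ^ (k + 2) ≤ (1 / 2) ^ 2 :=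
        pow_le_pow_of_le_one (by norm_num) (by norm_num) (by lia)
    _ = 1 / 4 := by norm_num

lemma exists_energy_flux_lt_energy_gradFst {c : ℝ} (hc : 0 ≤ c) : ∃ V : ℝ × ℝ → ℝ × ℝ,
    ContDiff ℝ (⊤ : ℕ∞) V ∧ tsupport V ⊆ Metric.ball 0 (1 / 2) ∧
      c * energy (emagComp flux) V < energy (emagComp gradFst) V := by
  set C := 2 * ((∫ p, |deriv cutoff (emagSq p)|) + ∫ p, sphereDensity 1 p)
  obtain ⟨K, hK⟩ := exists_nat_gt (72 * (c * C))
  have ha : (0 : ℝ) < ((1 / 2) ^ (K + 2)) ^ 2 := by positivity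
  refine ⟨_, contDiff_radialField_truncatedProfile ha,
    tsupport_radialField_truncatedProfile_subset _, ?_⟩
  calc _ ≤ c * C := by
        gcongr
        exact energy_flux_truncated_le ha
    _ < K * (1 / 72) := by linarith
    _ ≤ _ := le_energy_gradFst_truncated ha le_rfl

end DyadicSquares

section Assembly

/-- The positive potential `(ϱ, 0)`, with `ϱ = sphereDensity 1`, to which the oscillation is
added. -/
def basePotential : ℝ × ℝ → ℝ × ℝ := ContinuousLinearMap.inl ℝ ℝ ℝ ∘ sphereDensity 1

lemma contDiff_basePotential {n : WithTop ℕ∞} : ContDiff ℝ n basePotential :=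
  (ContinuousLinearMap.inl ℝ ℝ ℝ).contDiff.comp (contDiff_sphereDensity one_pos)

lemma integrable_fderiv_basePotential : Integrable (fderiv ℝ basePotential) := by
  have hderiv : fderiv ℝ basePotential = fun p =>
      ContinuousLinearMap.compL ℝ _ _ _ (.inl ℝ ℝ ℝ) (fderiv ℝ (sphereDensity 1) p) :=
    funext fun p => ((ContinuousLinearMap.inl ℝ ℝ ℝ).hasFDerivAt.comp p
      ((contDiff_sphereDensity one_pos).differentiable (n := 1) one_ne_zero p).hasFDerivAt).fderiv
  rw [hderiv]
  exact ContinuousLinearMap.integrable_comp _ integrable_fderiv_sphereDensity_one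

lemma fst_smul_basePotential_add_tiling_pos {V : ℝ × ℝ → ℝ × ℝ}
    (hV : Function.support V ⊆ Metric.ball 0 (1 / 2)) {B : ℝ} (hB : ∀ p, ‖V p‖ ≤ B) (N : ℕ)
    (p : ℝ × ℝ) : 0 < (((81 * (B + 1)) • basePotential + tiling N V) p).1 := by
  have hB₀ : 0 ≤ B := (norm_nonneg _).trans (hB 0)
  have hdens := sphereDensity_pos one_pos p
  change 0 < 81 * (B + 1) * sphereDensity 1 p + (tiling N V p).1
  rcases le_total ‖p‖ 2 with hp | hp
  · have htiling := (abs_le.1 ((norm_fst_le _).trans (norm_tiling_le hV hB N p))).1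
    nlinarith [le_sphereDensity_one hp]
  · rw [tiling_eq_zero hV N hp, Prod.fst_zero, add_zero]
    positivity

lemma exists_positive_potential (n : ℕ) : ∃ W : ℝ × ℝ → ℝ × ℝ,
    ContDiff ℝ (⊤ : ℕ∞) W ∧ (∀ p, 0 < (W p).1) ∧ Integrable (fun p => (W p).1) ∧
      Integrable (fderiv ℝ W) ∧
      n * energy (emagComp flux) W ≤ energy (emagComp gradFst) W := by
  obtain ⟨V, hV, hsupp, hlt⟩ := exists_energy_flux_lt_energy_gradFst n.cast_nonneg
  have hV₁ : ContDiff ℝ 1 V := hV.of_le (by simp)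
  have hsupp' := (subset_tsupport V).trans hsupp
  obtain ⟨B, hB⟩ := hV.continuous.bounded_above_of_compact_support
    (hasCompactSupport_of_tsupport_subset_ball hsupp)
  set base := (81 * (B + 1)) • basePotential
  have hbase {m : WithTop ℕ∞} : ContDiff ℝ m base := contDiff_const.smul contDiff_basePotential
  have hbase' : Integrable (fderiv ℝ base) := by
    simpa only [base, fderiv_const_smul_field] using! integrable_fderiv_basePotential.smul _
  have hbased := hbase.differentiable one_ne_zero
  obtain ⟨N, hN⟩ := exists_energy_add_tiling_le (continuous_emagComp gradFst)
    (continuous_emagComp flux) hV₁ hsupp hbased hbase' n.cast_nonneg hlt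
  have hT := contDiff_tiling hV N
  have hTc := hasCompactSupport_tiling hsupp' N
  have hT₁ : ContDiff ℝ 1 (tiling N V) := contDiff_tiling hV₁ N
  refine ⟨base + tiling N V, hbase.add hT, fst_smul_basePotential_add_tiling_pos hsupp' hB N, ?_,
    integrable_fderiv_add hbased (hT₁.differentiable one_ne_zero) hbase'
      (integrable_fderiv_of_hasCompactSupport hT₁ hTc), hN⟩
  exact (integrable_sphereDensity_one.const_mul _).add
    (hT.continuous.integrable_of_hasCompactSupport hTc).fst

lemma exists_normalized_potential (n : ℕ) : ∃ W : ℝ × ℝ → ℝ × ℝ,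
    ContDiff ℝ (⊤ : ℕ∞) W ∧ (∀ p, 0 < (W p).1) ∧ ∫ p, (W p).1 = 1 ∧
      Integrable (fderiv ℝ W) ∧
      n * energy (emagComp flux) W ≤ energy (emagComp gradFst) W := by
  obtain ⟨W, hW, hpos, hint, hint', hle⟩ := exists_positive_potential n
  have hmass : 0 < ∫ p, (W p).1 := by
    rw [integral_pos_iff_support_of_nonneg (fun p => (hpos p).le) hint,
      Function.support_eq_univ fun p => (hpos p).ne']
    exact Measure.measure_univ_pos.2 NeZero.out
  set Z := ∫ p, (W p).1
  refine ⟨Z⁻¹ • W, contDiff_const.smul hW, fun p => mul_pos (inv_pos.2 hmass) (hpos p), ?_, ?_, ?_⟩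
  · change ∫ p, Z⁻¹ * (W p).1 = 1
    rw [integral_const_mul, inv_mul_cancel₀ hmass.ne']
  · simpa only [fderiv_const_smul_field] using! hint'.smul _
  · rw [energy_const_smul, energy_const_smul, mul_left_comm]
    gcongr

/-- For `W = (ϱ, ψ)` the drift `b = (∇ϱ + ∇^⊥ψ) / ϱ`, so that `ϱ b` is the flux of `W`. -/
def drift (W : ℝ × ℝ → ℝ × ℝ) (p : ℝ × ℝ) : ℝ × ℝ := (W p).1⁻¹ • flux (fderiv ℝ W p)

lemma fst_smul_drift {W : ℝ × ℝ → ℝ × ℝ} {p : ℝ × ℝ} (hp : (W p).1 ≠ 0) :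
    (W p).1 • drift W p = flux (fderiv ℝ W p) :=
  smul_inv_smul₀ hp _

lemma contDiff_drift {W : ℝ × ℝ → ℝ × ℝ} (hW : ContDiff ℝ (⊤ : ℕ∞) W)
    (hne : ∀ p, (W p).1 ≠ 0) : ContDiff ℝ (⊤ : ℕ∞) (drift W) :=
  (hW.fst.inv hne).smul (flux.contDiff.comp (hW.fderiv_right (by simp)))

lemma emag_drift_mul_fst {W : ℝ × ℝ → ℝ × ℝ} {p : ℝ × ℝ} (hp : 0 < (W p).1) :
    emag (drift W p) * (W p).1 = emagComp flux (fderiv ℝ W p) := by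
  rw [emagComp_apply, ← fst_smul_drift hp.ne', emag_smul, abs_of_pos hp, mul_comm]

lemma integral_laplacian_add_drift_mul_fst_eq_zero {W : ℝ × ℝ → ℝ × ℝ} (hW : ContDiff ℝ 1 W)
    (hne : ∀ p, (W p).1 ≠ 0) {φ : ℝ × ℝ → ℝ} (hφ : ContDiff ℝ 2 φ)
    (hc : HasCompactSupport φ) :
    ∫ p, (pd1 (pd1 φ) p + pd2 (pd2 φ) p + fderiv ℝ φ p (drift W p)) * (W p).1 = 0 := by
  rw [← integral_laplacian_mul_add_flux_eq_zero hW hφ hc]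
  congr 1 with p
  rw [← fst_smul_drift (hne p), map_smul, smul_eq_mul]
  ring

end Assembly

/-- For every `n ∈ ℕ` there exist a smooth probability density `ϱ_n` on `ℝ²` and a smooth
vector field `b_n` with `|b_n|ϱ_n ∈ L¹(ℝ²)` such that `Δϱ_n − div(ϱ_n b_n) = 0` in the weak
sense and `∫ |∇ϱ_n| dx ≥ n ∫ |b_n| ϱ_n dx`. -/
theorem no_L1_gradient_estimate_for_FPK (n : ℕ) :
    ∃ (ϱ : ℝ × ℝ → ℝ) (b : ℝ × ℝ → ℝ × ℝ),
      ContDiff ℝ (⊤ : ℕ∞) ϱ ∧ (∀ p, 0 ≤ ϱ p) ∧ (∫ p, ϱ p = 1) ∧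
      ContDiff ℝ (⊤ : ℕ∞) b ∧
      Integrable (fun p => emag (b p) * ϱ p) ∧
      (∀ φ : ℝ × ℝ → ℝ, IsTest φ →
        ∫ p, (pd1 (pd1 φ) p + pd2 (pd2 φ) p + fderiv ℝ φ p (b p)) * ϱ p = 0) ∧
      (∫⁻ p, ENNReal.ofReal (emag (pd1 ϱ p, pd2 ϱ p))) ≥
        n * ∫⁻ p, ENNReal.ofReal (emag (b p) * ϱ p) := by
  obtain ⟨W, hW, hpos, hmass, hint, hle⟩ := exists_normalized_potential n
  have hW₁ : ContDiff ℝ 1 W := hW.of_le (by simp)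
  have hgrad (p : ℝ × ℝ) : emag (pd1 (fun q => (W q).1) p, pd2 (fun q => (W q).1) p) =
      emagComp gradFst (fderiv ℝ W p) := by
    rw [emagComp_apply, gradFst_fderiv (hW₁.differentiable one_ne_zero p)]
  have hflux (p : ℝ × ℝ) := emag_drift_mul_fst (hpos p)
  refine ⟨fun p => (W p).1, drift W, hW.fst, fun p => (hpos p).le, hmass,
    contDiff_drift hW fun p => (hpos p).ne', ?_, fun φ hφ => ?_, ?_⟩
  · simpa only [hflux] using integrable_seminorm_comp (continuous_emagComp flux) hint
  · exact integral_laplacian_add_drift_mul_fst_eq_zero hW₁ (fun p => (hpos p).ne')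
      (contDiff_infty.1 hφ.1 2) hφ.2
  · simp only [hgrad, hflux]
    rw [lintegral_ofReal_seminorm_fderiv (continuous_emagComp _) hint,
      lintegral_ofReal_seminorm_fderiv (continuous_emagComp _) hint,
      ← ENNReal.ofReal_natCast n, ← ENNReal.ofReal_mul n.cast_nonneg]
    exact ENNReal.ofReal_le_ofReal hle
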